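/- Let w be a double occurrence word on an n-element set V. Then every transversal n×n submatrix of the integer matrix IAS_w has determinant equal to −1, 0, or 1. -/

import Mathlib

open Matrix

noncomputable section

/-- `w` is a double occurrence word on `V`: each element of `V` occurs exactly twice. -/
def IsDOW {V : Type*} [DecidableEq V] (w : List V) : Prop := ∀ v : V, w.count v = 2

/-- Distinct `u` and `v` are interlaced in `w`: their occurrences appear in the order
`u v u v` or `v u v u`. -/
def Interlaced {V : Type*} (w : List V) (u v : V) : Prop :=
  [u, v, u, v].Sublist w ∨ [v, u, v, u].Sublist w

/-- The position of the first occurrence `v⁻` of `v` in `w`. -/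
def fstIdx {V : Type*} [DecidableEq V] (w : List V) (v : V) : ℕ :=
  w.findIdx (fun x => decide (x = v))

/-- The position of the second occurrence `v⁺` of `v` in `w`. -/
def sndIdx {V : Type*} [DecidableEq V] (w : List V) (v : V) : ℕ :=
  fstIdx w v + 1 + (w.drop (fstIdx w v + 1)).findIdx (fun x => decide (x = v))

/-- Position `k` lies in the interior of `v` in `w`, i.e. strictly between `v⁻` and `v⁺`. -/
def inInterior {V : Type*} [DecidableEq V] (w : List V) (v : V) (k : ℕ) : Prop :=
  fstIdx w v < k ∧ k < sndIdx w v

instance {V : Type*} [DecidableEq V] (w : List V) (v : V) (k : ℕ) :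
    Decidable (inInterior w v k) := by unfold inInterior; infer_instance

/-- The integer matrix `IAS_w = (I | A | B)` associated with a double occurrence word `w`;
the columns `(u,0)`, `(u,1)`, `(u,2)` are the `φ`, `χ`, `ψ` columns of `u`. -/
def IASword {V : Type*} [DecidableEq V] (w : List V) : Matrix V (V × Fin 3) ℤ :=
  Matrix.of fun v p =>
    if p.2 = 0 then (if v = p.1 then 1 else 0)
    else if p.2 = 1 then
      (if v = p.1 then 0 else
        (if inInterior w v (sndIdx w p.1) then 1 else 0)
          - (if inInterior w v (fstIdx w p.1) then 1 else 0))
    else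
      (if v = p.1 then 1 else
        (if inInterior w v (fstIdx w p.1) then 1 else 0)
          + (if inInterior w v (sndIdx w p.1) then 1 else 0))

/-!
The word `w` traces a path through `V` whose edges run from each position to the next. A choice of
`φ`, `χ` or `ψ` at each letter is a pairing of the two incoming and two outgoing half-edges there;
splitting every letter in two along this pairing leaves a digraph, whose edge-vertex incidence
matrix `N` is totally unimodular. Let `L` be the matrix of `≤` on the positions. It is invertible
over `ℤ`, its inverse being the identity minus the matrix of "immediately precedes", so
`det (L * N) ∈ {-1, 0, 1}`. Group the rows of `L * N` into first and second occurrences, and its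
columns into the halves containing the chosen transitions and the remaining halves: it becomes
`fromBlocks A (1 - A) C (1 - C)`, whose determinant is that of `A - C`, and `A - C` is exactly the
transversal submatrix of `IAS_w`.
-/

/-- The incidence matrices of digraphs, with one row per edge and one column per vertex: each row
is a unit vector minus a unit vector. Either unit vector may be missing, and both may coincide. -/
def IsDigraphIncidence {m n R : Type*} [Ring R] (A : Matrix m n R) : Prop :=
  ∀ i, ∃ S T : Set n, S.Subsingleton ∧ T.Subsingleton ∧ A i = S.indicator 1 - T.indicator 1

namespace IsDigraphIncidence

variable {m n R : Type*}

theorem submatrix {m' n' : Type*} [Ring R] {A : Matrix m n R} (hA : IsDigraphIncidence A)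
    (f : m' → m) {g : n' → n} (hg : g.Injective) : IsDigraphIncidence (A.submatrix f g) := by
  intro i
  obtain ⟨S, T, hS, hT, hrow⟩ := hA (f i)
  exact ⟨g ⁻¹' S, g ⁻¹' T, hS.preimage hg, hT.preimage hg, funext fun j => congrFun hrow (g j)⟩

theorem sum_row_eq_zero_or_exists_eq_single [Ring R] [Fintype n] [DecidableEq n]
    {A : Matrix m n R} (hA : IsDigraphIncidence A) (i : m) :
    ∑ j, A i j = 0 ∨ ∃ j, ∃ s : SignType, A i = Pi.single j (s : R) := by
  obtain ⟨S, T, hS, hT, hrow⟩ := hA i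
  rw [hrow]
  rcases hS.eq_empty_or_singleton with rfl | ⟨a, rfl⟩ <;>
    rcases hT.eq_empty_or_singleton with rfl | ⟨b, rfl⟩
  · simp
  · exact .inr ⟨b, -1, by simp [Set.indicator_singleton, Pi.single_neg, ← Pi.zero_def]⟩
  · exact .inr ⟨a, 1, by simp [Set.indicator_singleton, ← Pi.zero_def]⟩
  · exact .inl (by simp [Set.indicator_singleton])

end IsDigraphIncidence

theorem det_mem_range_signType_of_row_eq_single {R : Type*} [CommRing R] {k : ℕ}
    {A : Matrix (Fin (k + 1)) (Fin (k + 1)) R} {i j : Fin (k + 1)} {s : SignType}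
    (hrow : A i = Pi.single j (s : R))
    (hminor : (A.submatrix i.succAbove j.succAbove).det ∈ Set.range (SignType.cast (α := R))) :
    A.det ∈ Set.range (SignType.cast (α := R)) := by
  obtain ⟨d, hd⟩ := hminor
  have hdet : A.det = (-1) ^ (i + j : ℕ) * s * d := by
    rw [det_succ_row A i, Finset.sum_eq_single j (fun b _ hb => by simp [hrow, hb]) (by simp), hd,
      hrow, Pi.single_eq_same]
  exact ⟨(-1) ^ (i + j : ℕ) * s * d, by simp [hdet]⟩

theorem IsDigraphIncidence.det_mem_range_signType {R : Type*} [CommRing R] {k : ℕ}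
    {A : Matrix (Fin k) (Fin k) R} (hA : IsDigraphIncidence A) :
    A.det ∈ Set.range (SignType.cast (α := R)) := by
  induction k with
  | zero => exact ⟨1, by simp⟩
  | succ k ih =>
    by_cases hsum : ∀ i, ∑ j, A i j = 0
    · have hker : A *ᵥ 1 = 0 := by
        ext i
        simpa [mulVec, dotProduct] using hsum i
      exact ⟨0, by simp [det_eq_zero_of_mulVec_eq_zero_of_mem_nonZeroDivisors hker (i := 0)]⟩
    · push Not at hsum
      obtain ⟨i, hi⟩ := hsum
      obtain ⟨j, s, hrow⟩ := (hA.sum_row_eq_zero_or_exists_eq_single i).resolve_left hi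
      exact det_mem_range_signType_of_row_eq_single hrow
        (ih (hA.submatrix _ Fin.succAbove_right_injective))

theorem IsDigraphIncidence.isTotallyUnimodular {m n R : Type*} [CommRing R] {A : Matrix m n R}
    (hA : IsDigraphIncidence A) : A.IsTotallyUnimodular :=
  fun _ f _ _ hg => (hA.submatrix f hg).det_mem_range_signType

section Order

variable {ι κ α : Type*} [LinearOrder α] (pos : ι → α)

/-- The matrix of the relation `pos i ≤ pos j`. For injective `pos` this is the zeta matrix of the
linear order that `pos` induces on `ι`. -/
def leMatrix : Matrix ι ι ℤ := .of fun i j => if pos i ≤ pos j then 1 else 0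

/-- The matrix of the relation `pos i < pos j`. -/
def ltMatrix : Matrix ι ι ℤ := .of fun i j => if pos i < pos j then 1 else 0

/-- `i` immediately precedes `j` in the order induced by `pos`. The values of `pos` need not be
consecutive. -/
def IsPred (i j : ι) : Prop := pos i < pos j ∧ ∀ k, pos k < pos j → pos k ≤ pos i

open Classical in
/-- The matrix of the relation `IsPred pos`. -/
def predMatrix : Matrix ι ι ℤ := .of fun i j => if IsPred pos i j then 1 else 0

variable {pos}

theorem exists_isPred [Finite ι] {i j : ι} (h : pos i < pos j) : ∃ k, IsPred pos k j := by
  obtain ⟨k, hk, hmax⟩ := Set.exists_max_image {k | pos k < pos j} pos (Set.toFinite _) ⟨i, h⟩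
  exact ⟨k, hk, hmax⟩

theorem IsPred.left_unique (hpos : pos.Injective) {i i' j : ι} (h : IsPred pos i j)
    (h' : IsPred pos i' j) : i = i' :=
  hpos (le_antisymm (h'.2 i h.1) (h.2 i' h'.1))

theorem IsPred.right_unique (hpos : pos.Injective) {i j j' : ι} (h : IsPred pos i j)
    (h' : IsPred pos i j') : j = j' :=
  hpos (le_antisymm (not_lt.1 fun hlt => (h.2 j' hlt).not_gt h'.1)
    (not_lt.1 fun hlt => (h'.2 j hlt).not_gt h.1))

theorem IsPred.lt_iff_le {i j k : ι} (h : IsPred pos j k) : pos i < pos k ↔ pos i ≤ pos j :=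
  ⟨h.2 i, fun hi => hi.trans_lt h.1⟩

theorem predMatrix_row_eq_zero_or_exists_eq_single [DecidableEq ι] (hpos : pos.Injective) (i : ι) :
    predMatrix pos i = 0 ∨ ∃ j, predMatrix pos i = Pi.single j 1 := by
  by_cases h : ∃ j, IsPred pos i j
  · obtain ⟨j, hj⟩ := h
    refine .inr ⟨j, funext fun k => ?_⟩
    have hk : IsPred pos i k ↔ k = j := ⟨fun hk => hk.right_unique hpos hj, fun hk => hk ▸ hj⟩
    simp [predMatrix, hk, Pi.single_apply]
  · push Not at h
    exact .inl (funext fun k => by simp [predMatrix, h])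

theorem leMatrix_mul_predMatrix [Fintype ι] (hpos : pos.Injective) :
    leMatrix pos * predMatrix pos = ltMatrix pos := by
  ext i k
  rw [mul_apply]
  by_cases h : ∃ j, IsPred pos j k
  · obtain ⟨j, hj⟩ := h
    rw [Finset.sum_eq_single j]
    · simp [leMatrix, predMatrix, ltMatrix, hj, hj.lt_iff_le]
    · intro j' _ hne
      have hj' : ¬IsPred pos j' k := fun hj' => hne (hj'.left_unique hpos hj)
      simp [predMatrix, hj']
    · simp
  · have hik : ¬pos i < pos k := fun hik => h (exists_isPred hik)
    push Not at h
    simp [predMatrix, ltMatrix, h, hik]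

theorem leMatrix_sub_ltMatrix [DecidableEq ι] (hpos : pos.Injective) :
    leMatrix pos - ltMatrix pos = 1 := by
  ext i j
  rcases lt_trichotomy (pos i) (pos j) with h | h | h
  · simp [leMatrix, ltMatrix, h, h.le, one_apply_ne (ne_of_apply_ne pos h.ne)]
  · obtain rfl := hpos h
    simp [leMatrix, ltMatrix]
  · simp [leMatrix, ltMatrix, h.not_ge, h.not_gt, one_apply_ne (ne_of_apply_ne pos h.ne')]

theorem isUnit_det_leMatrix [Fintype ι] [DecidableEq ι] (hpos : pos.Injective) :
    IsUnit (leMatrix pos).det := by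
  refine isUnit_det_of_right_inverse (B := 1 - predMatrix pos) ?_
  rw [mul_sub, mul_one, leMatrix_mul_predMatrix hpos, leMatrix_sub_ltMatrix hpos]

/-- The matrix of the graph of `f`: row `i` is the unit vector at `f i`. -/
def functionMatrix [DecidableEq κ] (f : ι → κ) : Matrix ι κ ℤ :=
  (1 : Matrix κ κ ℤ).submatrix f id

theorem functionMatrix_row [DecidableEq κ] (f : ι → κ) (i : ι) :
    functionMatrix f i = Set.indicator {f i} 1 := by
  ext c
  simp [functionMatrix, one_apply, Set.indicator_apply, eq_comm]

theorem isDigraphIncidence_functionMatrix_sub [Fintype ι] [DecidableEq κ] (hpos : pos.Injective)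
    (f g : ι → κ) :
    IsDigraphIncidence (functionMatrix f - predMatrix pos * functionMatrix g) := by
  classical
  intro i
  have hrow : (functionMatrix f - predMatrix pos * functionMatrix g) i =
      Set.indicator {f i} 1 - predMatrix pos i ᵥ* functionMatrix g := by
    rw [← functionMatrix_row, ← mul_apply_eq_vecMul]
    rfl
  rcases predMatrix_row_eq_zero_or_exists_eq_single hpos i with h | ⟨j, h⟩
  · refine ⟨{f i}, ∅, Set.subsingleton_singleton, Set.subsingleton_empty, ?_⟩
    rw [hrow, h, zero_vecMul, Set.indicator_empty']
  · refine ⟨{f i}, {g j}, Set.subsingleton_singleton, Set.subsingleton_singleton, ?_⟩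
    rw [hrow, h, single_one_vecMul, ← functionMatrix_row g]
    rfl

theorem det_leMatrix_mul_sub_mem_range_signType [Fintype ι] [DecidableEq ι] (hpos : pos.Injective)
    (f g : ι → ι) :
    (leMatrix pos * functionMatrix f - ltMatrix pos * functionMatrix g).det ∈
      Set.range (SignType.cast (α := ℤ)) := by
  have hfactor : leMatrix pos * functionMatrix f - ltMatrix pos * functionMatrix g =
      leMatrix pos * (functionMatrix f - predMatrix pos * functionMatrix g) := by
    rw [mul_sub, ← Matrix.mul_assoc, leMatrix_mul_predMatrix hpos]
  obtain ⟨s, hs⟩ := (isTotallyUnimodular_iff_fintype _).1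
    (isDigraphIncidence_functionMatrix_sub hpos f g).isTotallyUnimodular ι id id
  rw [submatrix_id_id] at hs
  rw [hfactor, det_mul, ← hs]
  rcases Int.isUnit_iff.1 (isUnit_det_leMatrix hpos) with h | h
  · exact ⟨s, by simp [h]⟩
  · exact ⟨-s, by simp [h]⟩

end Order

theorem det_fromBlocks_one_sub {n R : Type*} [Fintype n] [DecidableEq n] [CommRing R]
    (A C : Matrix n n R) : (fromBlocks A (1 - A) C (1 - C)).det = (A - C).det := by
  have h : fromBlocks A (1 - A) C (1 - C) * fromBlocks 1 1 0 1 = fromBlocks A 1 C 1 := by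
    simp [fromBlocks_multiply]
  have hdet := congrArg det h
  rwa [det_mul, det_fromBlocks_zero₂₁, det_one, mul_one, mul_one, det_fromBlocks_one₂₂,
    Matrix.one_mul] at hdet

section Splitting

variable {V α : Type*}

/-- Each vertex `v` is split into `inl v` and `inr v`, and a half-edge at the occurrence `x` is
attached to the former if `b x` holds. As in all that follows, `inl v` and `inr v` also stand for
the first and the second occurrence of `v` when `V ⊕ V` indexes occurrences. -/
def splitVertex (b : V ⊕ V → Bool) (x : V ⊕ V) : V ⊕ V :=
  if b x then .inl (x.elim id id) else .inr (x.elim id id)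

/-- Whether the half-edge leaving `x` belongs to the transition that the column `(v, t v)` of
`IAS_w` stands for, `v` being the letter at `x`. These transitions are `{v⁻ in, v⁻ out}` for `φ`,
`{v⁻ in, v⁺ out}` for `χ` and `{v⁻ out, v⁺ out}` for `ψ`. -/
def selectedOut (t : V → Fin 3) : V ⊕ V → Bool :=
  Sum.elim (![true, false, true] ∘ t) (![false, true, true] ∘ t)

/-- The analogue of `selectedOut` for the half-edge entering `x`. -/
def selectedIn (t : V → Fin 3) : V ⊕ V → Bool :=
  Sum.elim (![true, true, false] ∘ t) (fun _ => false)

section FunctionMatrix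

variable [DecidableEq V] (b : V ⊕ V → Bool)

theorem functionMatrix_splitVertex :
    functionMatrix (splitVertex b) =
      fromBlocks (diagonal fun v => (b (.inl v)).toInt) (diagonal fun v => (!b (.inl v)).toInt)
        (diagonal fun v => (b (.inr v)).toInt) (diagonal fun v => (!b (.inr v)).toInt) := by
  ext x y
  cases h : b x <;> rcases x with v | v <;> rcases y with u | u <;>
    simp [functionMatrix, splitVertex, one_apply, diagonal_apply, h]

variable [Fintype V] {m : Type*} (M : Matrix m (V ⊕ V) ℤ) (r : m) (u : V)

theorem mul_functionMatrix_splitVertex_inl :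
    (M * functionMatrix (splitVertex b)) r (.inl u) =
      M r (.inl u) * (b (.inl u)).toInt + M r (.inr u) * (b (.inr u)).toInt := by
  simp [functionMatrix_splitVertex, mul_apply, diagonal_apply]

theorem mul_functionMatrix_splitVertex_inr :
    (M * functionMatrix (splitVertex b)) r (.inr u) =
      M r (.inl u) * (!b (.inl u)).toInt + M r (.inr u) * (!b (.inr u)).toInt := by
  simp [functionMatrix_splitVertex, mul_apply, diagonal_apply]

theorem mul_functionMatrix_splitVertex_inl_add_inr :
    (M * functionMatrix (splitVertex b)) r (.inl u) +
      (M * functionMatrix (splitVertex b)) r (.inr u) = M r (.inl u) + M r (.inr u) := by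
  rw [mul_functionMatrix_splitVertex_inl, mul_functionMatrix_splitVertex_inr]
  cases b (.inl u) <;> cases b (.inr u) <;> simp [add_comm]

end FunctionMatrix

variable [Fintype V] [DecidableEq V] [LinearOrder α]

/-- The product of `leMatrix pos` with the incidence matrix of the path through the occurrences in
the order of `pos`, split along the transitions that `t` selects. -/
def splitMatrix (pos : V ⊕ V → α) (t : V → Fin 3) : Matrix (V ⊕ V) (V ⊕ V) ℤ :=
  leMatrix pos * functionMatrix (splitVertex (selectedOut t)) -
    ltMatrix pos * functionMatrix (splitVertex (selectedIn t))

variable {pos : V ⊕ V → α} (t : V → Fin 3)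

theorem splitMatrix_inl (r : V ⊕ V) (u : V) :
    splitMatrix pos t r (.inl u) =
      ![leMatrix pos r (.inl u) - ltMatrix pos r (.inl u),
        leMatrix pos r (.inr u) - ltMatrix pos r (.inl u),
        leMatrix pos r (.inl u) + leMatrix pos r (.inr u)] (t u) := by
  simp only [splitMatrix, Matrix.sub_apply, mul_functionMatrix_splitVertex_inl, selectedOut,
    selectedIn, Sum.elim_inl, Sum.elim_inr, Function.comp_apply]
  generalize t u = i
  fin_cases i <;> simp

theorem splitMatrix_inl_add_inr (hpos : pos.Injective) (r : V ⊕ V) (u : V) :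
    splitMatrix pos t r (.inl u) + splitMatrix pos t r (.inr u) =
      (1 : Matrix (V ⊕ V) (V ⊕ V) ℤ) r (.inl u) + (1 : Matrix (V ⊕ V) (V ⊕ V) ℤ) r (.inr u) := by
  simp only [splitMatrix, ← leMatrix_sub_ltMatrix hpos, Matrix.sub_apply]
  linear_combination
    mul_functionMatrix_splitVertex_inl_add_inr (selectedOut t) (leMatrix pos) r u -
      mul_functionMatrix_splitVertex_inl_add_inr (selectedIn t) (ltMatrix pos) r u

theorem splitMatrix_eq_fromBlocks (hpos : pos.Injective) :
    splitMatrix pos t =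
      fromBlocks (splitMatrix pos t).toBlocks₁₁ (1 - (splitMatrix pos t).toBlocks₁₁)
        (splitMatrix pos t).toBlocks₂₁ (1 - (splitMatrix pos t).toBlocks₂₁) := by
  ext r (u | u)
  · rcases r with v | v <;> rfl
  · have h := splitMatrix_inl_add_inr t hpos r u
    rcases r with v | v <;> simp [toBlocks₁₁, toBlocks₂₁, one_apply] at h ⊢ <;> linarith

theorem det_toBlocks_sub_mem_range_signType (hpos : pos.Injective) :
    ((splitMatrix pos t).toBlocks₁₁ - (splitMatrix pos t).toBlocks₂₁).det ∈
      Set.range (SignType.cast (α := ℤ)) := by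
  rw [← det_fromBlocks_one_sub, ← splitMatrix_eq_fromBlocks t hpos]
  exact det_leMatrix_mul_sub_mem_range_signType hpos _ _

end Splitting

section Word

variable {V : Type*} [DecidableEq V] {w : List V}

theorem fstIdx_eq_idxOf (w : List V) (v : V) : fstIdx w v = w.idxOf v := rfl

theorem sndIdx_eq_idxOf (w : List V) (v : V) :
    sndIdx w v = w.idxOf v + 1 + (w.drop (w.idxOf v + 1)).idxOf v := rfl

theorem fstIdx_lt_sndIdx (w : List V) (v : V) : fstIdx w v < sndIdx w v := by
  unfold sndIdx
  omega

theorem mem_drop_idxOf_succ {v : V} (h : 2 ≤ w.count v) : v ∈ w.drop (w.idxOf v + 1) := by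
  have hmem : v ∈ w.erase v := by
    rw [← List.count_pos_iff, List.count_erase_self]
    omega
  rw [← List.eraseIdx_idxOf_eq_erase, List.eraseIdx_eq_take_drop_succ, List.mem_append] at hmem
  refine hmem.resolve_left fun htake => ?_
  exact lt_irrefl _ ((List.mem_take_iff_idxOf_lt (List.mem_of_mem_take htake)).1 htake)

/-- The positions in `w` of the first occurrences `inl v` and the second occurrences `inr v`. -/
def occurrencePos (w : List V) : V ⊕ V → ℕ := Sum.elim (fstIdx w) (sndIdx w)

@[simp]
theorem occurrencePos_inl (w : List V) (v : V) : occurrencePos w (.inl v) = fstIdx w v := rfl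

@[simp]
theorem occurrencePos_inr (w : List V) (v : V) : occurrencePos w (.inr v) = sndIdx w v := rfl

theorem getElem?_occurrencePos (hw : ∀ v, 2 ≤ w.count v) (x : V ⊕ V) :
    w[occurrencePos w x]? = some (x.elim id id) := by
  rcases x with v | v
  · rw [occurrencePos_inl, fstIdx_eq_idxOf]
    exact List.getElem?_idxOf (List.count_pos_iff.1 (Nat.zero_lt_two.trans_le (hw v)))
  · rw [occurrencePos_inr, sndIdx_eq_idxOf, ← List.getElem?_drop]
    exact List.getElem?_idxOf (mem_drop_idxOf_succ (hw v))

theorem occurrencePos_injective (hw : ∀ v, 2 ≤ w.count v) : (occurrencePos w).Injective := by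
  intro x y h
  have hletter : x.elim id id = y.elim id id := by
    have hsome := getElem?_occurrencePos hw x
    rw [h, getElem?_occurrencePos hw y] at hsome
    exact (Option.some.inj hsome).symm
  rcases x with u | u <;> rcases y with v | v <;> obtain rfl : u = v := hletter
  · rfl
  · exact absurd h (fstIdx_lt_sndIdx w u).ne
  · exact absurd h (fstIdx_lt_sndIdx w u).ne'
  · rfl

theorem leMatrix_sub_eq_ite_inInterior (w : List V) {v : V} {x : V ⊕ V}
    (hx : occurrencePos w x ≠ fstIdx w v) (hx' : occurrencePos w x ≠ sndIdx w v) :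
    leMatrix (occurrencePos w) (.inl v) x - leMatrix (occurrencePos w) (.inr v) x =
      if inInterior w v (occurrencePos w x) then 1 else 0 := by
  have hv := fstIdx_lt_sndIdx w v
  simp only [leMatrix, of_apply, occurrencePos_inl, occurrencePos_inr, inInterior]
  split_ifs <;> omega

theorem IASword_self (w : List V) (v : V) (i : Fin 3) : IASword w v (v, i) = ![1, 0, 1] i := by
  fin_cases i <;> simp [IASword]

theorem IASword_of_ne (w : List V) {v u : V} (h : v ≠ u) (i : Fin 3) :
    IASword w v (u, i) =
      ![0,
        (if inInterior w v (sndIdx w u) then 1 else 0) -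
          (if inInterior w v (fstIdx w u) then 1 else 0),
        (if inInterior w v (fstIdx w u) then 1 else 0) +
          (if inInterior w v (sndIdx w u) then 1 else 0)] i := by
  fin_cases i <;> simp [IASword, h]

variable [Fintype V]

theorem splitMatrix_occurrencePos_sub_self (w : List V) (t : V → Fin 3) (v : V) :
    splitMatrix (occurrencePos w) t (.inl v) (.inl v) -
      splitMatrix (occurrencePos w) t (.inr v) (.inl v) = ![1, 0, 1] (t v) := by
  have hv := fstIdx_lt_sndIdx w v
  simp only [splitMatrix_inl]
  generalize t v = i
  fin_cases i <;> simp [leMatrix, ltMatrix, occurrencePos, hv.le, hv.not_ge, hv.not_gt]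

theorem IASword_apply_eq_splitMatrix_sub (hw : ∀ v, 2 ≤ w.count v) (t : V → Fin 3) (v u : V) :
    IASword w v (u, t u) = splitMatrix (occurrencePos w) t (.inl v) (.inl u) -
      splitMatrix (occurrencePos w) t (.inr v) (.inl u) := by
  obtain rfl | h := eq_or_ne v u
  · rw [IASword_self, splitMatrix_occurrencePos_sub_self]
  have hinj := occurrencePos_injective hw
  have hfst : leMatrix (occurrencePos w) (.inl v) (.inl u) -
      leMatrix (occurrencePos w) (.inr v) (.inl u) =
        if inInterior w v (fstIdx w u) then 1 else 0 :=
    leMatrix_sub_eq_ite_inInterior w (hinj.ne (Sum.inl_injective.ne h.symm))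
      (hinj.ne Sum.inl_ne_inr)
  have hsnd : leMatrix (occurrencePos w) (.inl v) (.inr u) -
      leMatrix (occurrencePos w) (.inr v) (.inr u) =
        if inInterior w v (sndIdx w u) then 1 else 0 :=
    leMatrix_sub_eq_ite_inInterior w (hinj.ne Sum.inr_ne_inl)
      (hinj.ne (Sum.inr_injective.ne h.symm))
  have hlt : ltMatrix (occurrencePos w) = leMatrix (occurrencePos w) - 1 := by
    rw [← leMatrix_sub_ltMatrix hinj, sub_sub_cancel]
  rw [IASword_of_ne w h, ← hfst, ← hsnd, splitMatrix_inl, splitMatrix_inl, hlt]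
  generalize t u = i
  fin_cases i <;> simp [h] <;> ring

end Word

theorem IASword_transversal_unimodular_general {V : Type*} [Fintype V] [DecidableEq V]
    (w : List V) (hw : ∀ v, 2 ≤ w.count v) (t : V → Fin 3) :
    (Matrix.of fun v u => IASword w v (u, t u)).det ∈ ({-1, 0, 1} : Set ℤ) := by
  have hblocks : (Matrix.of fun v u => IASword w v (u, t u)) =
      (splitMatrix (occurrencePos w) t).toBlocks₁₁ -
        (splitMatrix (occurrencePos w) t).toBlocks₂₁ := by
    ext v u
    exact IASword_apply_eq_splitMatrix_sub hw t v u
  obtain ⟨s, hs⟩ := det_toBlocks_sub_mem_range_signType t (occurrencePos_injective hw)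
  rw [hblocks, ← hs]
  cases s <;> simp

/-- Every transversal `n × n` submatrix of the integer matrix `IAS_w` of a double
occurrence word has determinant `-1`, `0`, or `1`. -/
theorem IASword_transversal_unimodular
    {V : Type} [Fintype V] [DecidableEq V] (w : List V) (hw : IsDOW w)
    (t : V → Fin 3) :
    (Matrix.of fun v u => IASword w v (u, t u)).det ∈ ({-1, 0, 1} : Set ℤ) :=
  IASword_transversal_unimodular_general w (fun v => (hw v).ge) t
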